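/- Let λ0, λ1 ∈ ℝ with λ0 > 0, λ1 > 0, λ0 + λ1 = 1, and ρ := Matrix.diagonal ![ (λ0 : ℂ), (λ1 : ℂ) ]. Let A1, A2 be Hermitian 2×2 complex matrices with trace 0 all of whose entries are real (i.e., (A_i μ ν).im = 0 for all μ, ν), with SLDs L1, L2 relative to ρ. Then Tr[ρ * (L1 * L2 − L2 * L1)] = 0; i.e., when the encoded state and its parameter-derivatives are real Hermitian matrices, the achievability condition of the quantum Cramér–Rao bound is automatically satisfied. -/

import Mathlib

open Matrix

/-- The symmetric logarithmic derivative of `A` relative to `ρ = diagonal ![λ0, λ1]`,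
defined entrywise by `L μ ν = 2 ⬝ A μ ν / (λμ + λν)`. -/
noncomputable def sld (l0 l1 : ℝ) (A : Matrix (Fin 2) (Fin 2) ℂ) : Matrix (Fin 2) (Fin 2) ℂ :=
  Matrix.of fun μ ν => 2 * A μ ν / ((![l0, l1] μ + ![l0, l1] ν : ℝ) : ℂ)

/-!
A symmetric logarithmic derivative `L` of `A` at `ρ` solves `ρ L + L ρ = 2 A`, and positivity of `ρ`
makes the solution unique. If `ρ` and `A` are symmetric, then `Lᵀ` solves the same equation, so `L`
is symmetric too. Finally, transposition reverses products and preserves traces, so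
`tr (ρ L₁ L₂) = tr (L₂ L₁ ρ) = tr (ρ L₂ L₁)`.
-/

open scoped ComplexOrder

variable {n R 𝕜 : Type*}

theorem isSymm_of_isHermitian_of_im_eq_zero [RCLike 𝕜] {A : Matrix n n 𝕜}
    (hA : A.IsHermitian) (him : ∀ i j, RCLike.im (A i j) = 0) : A.IsSymm :=
  IsSymm.ext fun i j => by
    rw [← hA.apply, RCLike.star_def, RCLike.conj_eq_iff_im.mpr (him i j)]

variable [Fintype n]

theorem trace_mul_commutator_eq_zero_of_isSymm [CommRing R] {S M N : Matrix n n R}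
    (hS : S.IsSymm) (hM : M.IsSymm) (hN : N.IsSymm) : trace (S * (M * N - N * M)) = 0 := by
  rw [mul_sub, trace_sub, sub_eq_zero]
  calc trace (S * (M * N)) = trace (S * (M * N))ᵀ := (trace_transpose _).symm
    _ = trace (N * M * S) := by rw [transpose_mul, transpose_mul, hS.eq, hM.eq, hN.eq]
    _ = trace (S * (N * M)) := trace_mul_comm _ _

theorem eq_zero_of_trace_conjTranspose_mul_mul_eq_zero [RCLike 𝕜] {m : Type*} [Fintype m]
    {ρ : Matrix n n 𝕜} (hρ : ρ.PosDef) {X : Matrix n m 𝕜} (hX : trace (Xᴴ * ρ * X) = 0) :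
    X = 0 := by
  have hzero : Xᴴ * ρ * X = 0 :=
    (hρ.posSemidef.conjTranspose_mul_mul_same X).trace_eq_zero_iff.mp hX
  have hcol (j : m) : X.col j = 0 := by
    by_contra hne
    refine (hρ.dotProduct_mulVec_pos hne).ne' ?_
    calc star (X.col j) ⬝ᵥ ρ *ᵥ X.col j = (Xᴴ * (ρ * X)) j j := rfl
      _ = 0 := by rw [← Matrix.mul_assoc, hzero, Matrix.zero_apply]
  ext i j
  exact congrFun (hcol j) i

theorem eq_zero_of_posDef_mul_add_mul_eq_zero [RCLike 𝕜] {ρ X : Matrix n n 𝕜}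
    (hρ : ρ.PosDef) (hX : ρ * X + X * ρ = 0) : X = 0 := by
  have hleft : 0 ≤ trace (Xᴴ * ρ * X) :=
    (hρ.posSemidef.conjTranspose_mul_mul_same X).trace_nonneg
  have hright : 0 ≤ trace (X * ρ * Xᴴ) :=
    (hρ.posSemidef.mul_mul_conjTranspose_same X).trace_nonneg
  have hsum : trace (Xᴴ * ρ * X) + trace (X * ρ * Xᴴ) = 0 := by
    rw [trace_mul_comm (X * ρ), ← trace_add, Matrix.mul_assoc, ← Matrix.mul_add, hX,
      Matrix.mul_zero, trace_zero]
  exact eq_zero_of_trace_conjTranspose_mul_mul_eq_zero hρ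
    ((add_eq_zero_iff_of_nonneg hleft hright).mp hsum).1

/-- `L` is a symmetric logarithmic derivative of `A` at `ρ`, in the basis-free form of the defining
equation `A = (ρ L + L ρ) / 2`. The factor `2` is on the side of `A` to avoid a division. -/
def IsSLD [Semiring R] (ρ A L : Matrix n n R) : Prop :=
  ρ * L + L * ρ = 2 • A

namespace IsSLD

theorem unique [RCLike 𝕜] {ρ A L L' : Matrix n n 𝕜} (hρ : ρ.PosDef)
    (hL : IsSLD ρ A L) (hL' : IsSLD ρ A L') : L = L' := by
  refine sub_eq_zero.mp (eq_zero_of_posDef_mul_add_mul_eq_zero hρ ?_)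
  calc ρ * (L - L') + (L - L') * ρ = (ρ * L + L * ρ) - (ρ * L' + L' * ρ) := by noncomm_ring
    _ = 0 := sub_eq_zero.mpr (hL.trans hL'.symm)

theorem transpose [CommSemiring R] {ρ A L : Matrix n n R} (hL : IsSLD ρ A L) :
    IsSLD ρᵀ Aᵀ Lᵀ := by
  rw [IsSLD, ← transpose_mul, ← transpose_mul, add_comm, ← transpose_add, hL, transpose_smul]

theorem isSymm [RCLike 𝕜] {ρ A L : Matrix n n 𝕜} (hL : IsSLD ρ A L) (hρ : ρ.PosDef)
    (hρ_symm : ρ.IsSymm) (hA : A.IsSymm) : L.IsSymm := by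
  have hLT : IsSLD ρ A Lᵀ := by simpa only [hρ_symm.eq, hA.eq] using hL.transpose
  exact hLT.unique hρ hL

end IsSLD

theorem isSLD_diagonal [Field R] [DecidableEq n] {d : n → R} (hd : ∀ i j, d i + d j ≠ 0)
    (A : Matrix n n R) : IsSLD (diagonal d) A (of fun i j => 2 * A i j / (d i + d j)) := by
  ext i j
  rw [Matrix.add_apply, Matrix.smul_apply, diagonal_mul, mul_diagonal, of_apply,
    mul_comm _ (d j), ← add_mul, mul_div_cancel₀ _ (hd i j), nsmul_eq_mul, Nat.cast_ofNat]

theorem ofReal_fin_two_pos {l0 l1 : ℝ} (hl0 : 0 < l0) (hl1 : 0 < l1) :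
    ∀ μ, 0 < ![(l0 : ℂ), (l1 : ℂ)] μ :=
  Fin.forall_fin_two.mpr ⟨Complex.zero_lt_real.mpr hl0, Complex.zero_lt_real.mpr hl1⟩

theorem isSLD_sld {l0 l1 : ℝ} (hl0 : 0 < l0) (hl1 : 0 < l1) (A : Matrix (Fin 2) (Fin 2) ℂ) :
    IsSLD (diagonal ![(l0 : ℂ), (l1 : ℂ)]) A (sld l0 l1 A) := by
  have hpos := ofReal_fin_two_pos hl0 hl1
  have hsld : sld l0 l1 A = of fun μ ν =>
      2 * A μ ν / (![(l0 : ℂ), (l1 : ℂ)] μ + ![(l0 : ℂ), (l1 : ℂ)] ν) := by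
    ext μ ν
    fin_cases μ <;> fin_cases ν <;> simp [sld]
  rw [hsld]
  exact isSLD_diagonal (fun μ ν => (add_pos (hpos μ) (hpos ν)).ne') A

theorem stmt_12_general [RCLike 𝕜] {ρ A₁ A₂ L₁ L₂ : Matrix n n 𝕜} (hρ : ρ.PosDef)
    (hρ_symm : ρ.IsSymm) (hA₁ : A₁.IsSymm) (hA₂ : A₂.IsSymm)
    (hL₁ : IsSLD ρ A₁ L₁) (hL₂ : IsSLD ρ A₂ L₂) :
    trace (ρ * (L₁ * L₂ - L₂ * L₁)) = 0 :=
  trace_mul_commutator_eq_zero_of_isSymm hρ_symm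
    (hL₁.isSymm hρ hρ_symm hA₁) (hL₂.isSymm hρ hρ_symm hA₂)

theorem stmt_12 (l0 l1 : ℝ) (hl0 : 0 < l0) (hl1 : 0 < l1) (hsum : l0 + l1 = 1)
    (ρ : Matrix (Fin 2) (Fin 2) ℂ) (hρ : ρ = Matrix.diagonal ![(l0 : ℂ), (l1 : ℂ)])
    (A1 A2 : Matrix (Fin 2) (Fin 2) ℂ)
    (hA1 : A1.IsHermitian) (hA2 : A2.IsHermitian)
    (hA1tr : A1.trace = 0) (hA2tr : A2.trace = 0)
    (hA1re : ∀ μ ν, (A1 μ ν).im = 0) (hA2re : ∀ μ ν, (A2 μ ν).im = 0)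
    (L1 L2 : Matrix (Fin 2) (Fin 2) ℂ) (hL1 : L1 = sld l0 l1 A1) (hL2 : L2 = sld l0 l1 A2) :
    Matrix.trace (ρ * (L1 * L2 - L2 * L1)) = 0 := by
  subst hρ hL1 hL2
  exact stmt_12_general (.diagonal (ofReal_fin_two_pos hl0 hl1)) (isSymm_diagonal _)
    (isSymm_of_isHermitian_of_im_eq_zero hA1 hA1re) (isSymm_of_isHermitian_of_im_eq_zero hA2 hA2re)
    (isSLD_sld hl0 hl1 A1) (isSLD_sld hl0 hl1 A2)
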